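/- arXiv:1604.03596 — 3 statements merged into one kernel-verified Lean document; each statement's English description precedes it below -/
import Mathlib

section
/- Restriction Principle (decomposition form). Let k be a field, n ≥ 3, and d a zigzag shape of length n such that for some index 2 ≤ κ ≤ n−1 the two structure maps at positions κ−1 and κ point in the same direction (say both forward, giving maps g : V_{κ−1} → V_κ and h : V_κ → V_{κ+1}; the backward case is symmetric). Let V be a zigzag module of shape d, and let W be the zigzag module over the index set {1,…,n}∖{κ} (relabelled as 1,…,n−1) obtained from V by deleting the space V_κ and replacing the pair of maps g, h by the composite h∘g, keeping all other spaces and maps. Suppose V is isomorphic, as a zigzag module, to a direct sum ⊕_{i∈I} I[p_i, q_i] of interval modules of shape d, indexed by an arbitrary set I. Then W is isomorphic to the direct sum, over those i ∈ I with [p_i, q_i] ≠ [κ, κ], of the interval modules over the restricted intervals, where the restriction of an interval [p, q] removes the index κ: an interval not containing κ, or containing κ in its interior, restricts to [p,q]∖{κ}; an interval [p, κ] with p < κ restricts to [p, κ−1]; and an interval [κ, q] with q > κ restricts to [κ+1, q] (all reindexed along the relabelling of {1,…,n}∖{κ} as {1,…,n−1}). -/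
/-!
Zigzag modules indexed by the natural numbers (0-based).  A zigzag module of
length `n` in the sense of the paper (spaces `V_1, …, V_n`, 1-based) is encoded
with spaces indexed by `0, …, n-1`; a shape `d : ℕ → Bool` records, for each
`i`, whether the structure map between positions `i` and `i+1` points forward
(`true`) or backward (`false`).
-/

/-- A zigzag module of shape `d` over the field `k`. -/
structure ZigzagModule (k : Type) [Field k] (d : ℕ → Bool) where
  V : ℕ → Type
  [acg : ∀ i, AddCommGroup (V i)]
  [mod : ∀ i, Module k (V i)]
  fwd : ∀ i, d i = true → (V i →ₗ[k] V (i + 1))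
  bwd : ∀ i, d i = false → (V (i + 1) →ₗ[k] V i)

attribute [instance] ZigzagModule.acg ZigzagModule.mod

/-- An isomorphism of zigzag modules of the same shape: a family of linear
equivalences commuting with all structure maps. -/
structure ZigzagIso {k : Type} [Field k] {d : ℕ → Bool}
    (M N : ZigzagModule k d) where
  e : ∀ i, M.V i ≃ₗ[k] N.V i
  comm_fwd : ∀ i (h : d i = true) (x : M.V i),
    e (i + 1) (M.fwd i h x) = N.fwd i h (e i x)
  comm_bwd : ∀ i (h : d i = false) (x : M.V (i + 1)),
    e i (M.bwd i h x) = N.bwd i h (e (i + 1) x)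

/-- The `i`-th space of the interval module `I[p,q]`, realized as the submodule
`⊤` of `k` (a copy of `k`) when `p ≤ i ≤ q` and the submodule `⊥` (the zero
space) otherwise. -/
def intervalSpace (k : Type) [Field k] (p q i : ℕ) : Submodule k k :=
  if p ≤ i ∧ i ≤ q then ⊤ else ⊥

open Classical in
/-- The structure map of an interval module: the identity (inclusion) if both
endpoints lie in the interval, the zero map otherwise. -/
noncomputable def intervalMap (k : Type) [Field k] (p q i j : ℕ) :
    (intervalSpace k p q i) →ₗ[k] (intervalSpace k p q j) :=
  if h : intervalSpace k p q i ≤ intervalSpace k p q j then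
    Submodule.inclusion h
  else 0

/-- The interval module `I[p,q]` of shape `d`: a copy of `k` at each index
`p ≤ i ≤ q`, the zero space elsewhere; identity maps between consecutive copies
of `k`, zero maps elsewhere. -/
noncomputable def intervalModule (k : Type) [Field k] (d : ℕ → Bool)
    (p q : ℕ) : ZigzagModule k d where
  V i := intervalSpace k p q i
  fwd i _ := intervalMap k p q i (i + 1)
  bwd i _ := intervalMap k p q (i + 1) i

/-- Pointwise direct sum of a family of zigzag modules of the same shape. -/
noncomputable def dsumModule (k : Type) [Field k] (d : ℕ → Bool)
    (I : Type) [DecidableEq I] (F : I → ZigzagModule k d) :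
    ZigzagModule k d where
  V i := DirectSum I fun j => (F j).V i
  fwd i h := DirectSum.toModule k I _ fun j =>
    (DirectSum.lof k I (fun j => (F j).V (i + 1)) j).comp ((F j).fwd i h)
  bwd i h := DirectSum.toModule k I _ fun j =>
    (DirectSum.lof k I (fun j => (F j).V i) j).comp ((F j).bwd i h)

/-- Relabelling of indices after deleting the index `κ`:
index `i` of the new module corresponds to index `i` (if `i < κ`) or `i + 1`
(if `i ≥ κ`) of the old module. -/
def delIdx (κ i : ℕ) : ℕ := if i < κ then i else i + 1

/-- The shape obtained from `d` by deleting the index `κ` and composing the two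
(equally directed) structure maps at positions `κ - 1` and `κ`. -/
def delShape (d : ℕ → Bool) (κ : ℕ) : ℕ → Bool :=
  fun i => if i < κ then d i else d (i + 1)

/-- The zigzag module obtained from `V` by deleting the space at index `κ`
(where the structure maps at positions `κ - 1` and `κ` both point forward) and
replacing the two maps `g : V_{κ-1} → V_κ` and `h : V_κ → V_{κ+1}` by their
composite `h ∘ g`, keeping all other spaces and maps. -/
noncomputable def deleteModule {k : Type} [Field k] {d : ℕ → Bool}
    (V : ZigzagModule k d) (κ : ℕ) (hκ : 1 ≤ κ)
    (hd1 : d (κ - 1) = true) (hd2 : d κ = true) :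
    ZigzagModule k (delShape d κ) where
  V i := V.V (delIdx κ i)
  fwd i h := by
    show V.V (delIdx κ i) →ₗ[k] V.V (delIdx κ (i + 1))
    refine if hlt : i + 1 < κ then ?_ else if heq : i + 1 = κ then ?_ else ?_
    · -- both indices below κ : the original map at position `i`
      have e1 : delIdx κ i = i := if_pos (by omega)
      have e2 : delIdx κ (i + 1) = i + 1 := if_pos hlt
      rw [e1, e2]
      exact V.fwd i (by
        have hi : i < κ := by omega
        simpa [delShape, hi] using h)
    · -- `i = κ - 1` : the composite of the two maps at positions `κ-1` and `κ`
      have e1 : delIdx κ i = i := if_pos (by omega)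
      have e2 : delIdx κ (i + 1) = κ + 1 := by
        rw [delIdx, if_neg (by omega), heq]
      rw [e1, e2]
      have hdi : d i = true := by
        have hi : i = κ - 1 := by omega
        rw [hi]; exact hd1
      exact (V.fwd κ hd2).comp (heq ▸ V.fwd i hdi)
    · -- both indices at or above κ : the original map at position `i + 1`
      have e1 : delIdx κ i = i + 1 := by rw [delIdx, if_neg (by omega)]
      have e2 : delIdx κ (i + 1) = i + 2 := by rw [delIdx, if_neg (by omega)]
      rw [e1, e2]
      exact V.fwd (i + 1)
        (by
        have hi : ¬ i < κ := by omega
        simpa [delShape, hi] using h)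
  bwd i h := by
    show V.V (delIdx κ (i + 1)) →ₗ[k] V.V (delIdx κ i)
    refine if hlt : i + 1 < κ then ?_ else if heq : i + 1 = κ then ?_ else ?_
    · have e1 : delIdx κ i = i := if_pos (by omega)
      have e2 : delIdx κ (i + 1) = i + 1 := if_pos hlt
      rw [e1, e2]
      exact V.bwd i (by
        have hi : i < κ := by omega
        simpa [delShape, hi] using h)
    · -- impossible: the map at position `κ - 1` points forward
      exfalso
      have hdi : d i = false := by
        have hi : i < κ := by omega
        simpa [delShape, hi] using h
      have hi : i = κ - 1 := by omega
      rw [hi, hd1] at hdi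
      simp at hdi
    · have e1 : delIdx κ i = i + 1 := by rw [delIdx, if_neg (by omega)]
      have e2 : delIdx κ (i + 1) = i + 2 := by rw [delIdx, if_neg (by omega)]
      rw [e1, e2]
      exact V.bwd (i + 1)
        (by
        have hi : ¬ i < κ := by omega
        simpa [delShape, hi] using h)

/-!
Deleting the index `κ` is functorial in the module and commutes with direct sums, so it suffices to
delete `κ` from a single interval module `I[p,q]`. There the composite of consecutive structure maps
is again the map of `I[p,q]` between the outer indices, because intervals are convex; hence deletion
only restricts the interval. The summands with `[p,q] = [κ,κ]` become zero and can be dropped.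
-/

section DirectSum

variable {R ι : Type*} [Semiring R] {M N : ι → Type*}
  [∀ i, AddCommMonoid (M i)] [∀ i, Module R (M i)] [∀ i, AddCommMonoid (N i)] [∀ i, Module R (N i)]

theorem toModule_lof_comp_eq_lmap [DecidableEq ι] (f : ∀ i, M i →ₗ[R] N i) :
    DirectSum.toModule R ι (DirectSum ι N) (fun i => DirectSum.lof R ι N i ∘ₗ f i) =
      DirectSum.lmap f := by
  ext i x : 2
  simp

variable (R)

theorem subtypeDomainLinearMap_lof [DecidableEq ι] (P : ι → Prop) [DecidablePred P]
    (i : {i // P i}) (y : M i) :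
    DFinsupp.subtypeDomainLinearMap R M P (DirectSum.lof R ι M i y) =
      DirectSum.lof R {i // P i} (fun i => M i) i y := by
  refine DirectSum.ext_component R fun j => ?_
  change DirectSum.component R ι M j (DirectSum.lof R ι M i y) = _
  rw [DirectSum.component.of, DirectSum.component.of]
  by_cases hij : i = j
  · subst hij
    simp
  · rw [dif_neg (Subtype.coe_ne_coe.mpr hij), dif_neg hij]

/-- The direct sum of a family of modules as the direct sum of the subfamily singled out by a
predicate `P`, when all the other summands are zero; the map forgets the vanishing coordinates. -/
def directSumSubtypeEquiv [DecidableEq ι] (P : ι → Prop) [DecidablePred P]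
    (hM : ∀ i, ¬ P i → Subsingleton (M i)) :
    DirectSum ι M ≃ₗ[R] DirectSum {i // P i} fun i => M i :=
  LinearEquiv.ofLinearMap (DFinsupp.subtypeDomainLinearMap R M P)
    (DirectSum.toModule R _ _ fun i => DirectSum.lof R ι M i)
    (by
      ext i y : 2
      simp only [LinearMap.comp_apply, DirectSum.toModule_lof, LinearMap.id_apply]
      exact subtypeDomainLinearMap_lof R P i y)
    (by
      ext i y : 2
      by_cases hi : P i
      · simp [subtypeDomainLinearMap_lof R P ⟨i, hi⟩]
      · have := hM i hi
        simp [Subsingleton.elim y 0])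

end DirectSum

section Zigzag

variable {k : Type} [Field k] {d : ℕ → Bool}

/-- A morphism of zigzag modules of the same shape: a family of linear maps commuting with all
structure maps. -/
structure ZigzagHom (M N : ZigzagModule k d) where
  app : ∀ i, M.V i →ₗ[k] N.V i
  comm_fwd : ∀ i (h : d i = true) (x : M.V i), app (i + 1) (M.fwd i h x) = N.fwd i h (app i x)
  comm_bwd : ∀ i (h : d i = false) (x : M.V (i + 1)),
    app i (M.bwd i h x) = N.bwd i h (app (i + 1) x)

namespace ZigzagIso

/-- The morphism underlying an isomorphism of zigzag modules. -/
def toHom {M N : ZigzagModule k d} (φ : ZigzagIso M N) : ZigzagHom M N where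
  app i := φ.e i
  comm_fwd := φ.comm_fwd
  comm_bwd := φ.comm_bwd

/-- The composite of two isomorphisms of zigzag modules. -/
def trans {L M N : ZigzagModule k d} (φ : ZigzagIso L M) (ψ : ZigzagIso M N) :
    ZigzagIso L N where
  e i := (φ.e i).trans (ψ.e i)
  comm_fwd i h x := by simp only [LinearEquiv.trans_apply, φ.comm_fwd, ψ.comm_fwd]
  comm_bwd i h x := by simp only [LinearEquiv.trans_apply, φ.comm_bwd, ψ.comm_bwd]

end ZigzagIso

section Sum

variable {I : Type} [DecidableEq I] (F G : I → ZigzagModule k d)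

theorem dsumModule_fwd (i : ℕ) (h : d i = true) :
    (dsumModule k d I F).fwd i h = DirectSum.lmap fun j => (F j).fwd i h :=
  toModule_lof_comp_eq_lmap _

theorem dsumModule_bwd (i : ℕ) (h : d i = false) :
    (dsumModule k d I F).bwd i h = DirectSum.lmap fun j => (F j).bwd i h :=
  toModule_lof_comp_eq_lmap _

/-- The projection of a direct sum of zigzag modules onto its `j`-th summand. -/
def dsumProj (j : I) : ZigzagHom (dsumModule k d I F) (F j) where
  app i := DirectSum.component k I (fun j => (F j).V i) j
  comm_fwd i h x := by rw [dsumModule_fwd]; rfl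
  comm_bwd i h x := by rw [dsumModule_bwd]; rfl

variable {F G}

/-- A family of isomorphisms between the summands induces an isomorphism of direct sums. -/
def dsumCongr (φ : ∀ j, ZigzagIso (F j) (G j)) :
    ZigzagIso (dsumModule k d I F) (dsumModule k d I G) where
  e i := DirectSum.congrLinearEquiv fun j => (φ j).e i
  comm_fwd i h x := by
    rw [dsumModule_fwd, dsumModule_fwd]
    exact DirectSum.ext_component k fun j => (φ j).comm_fwd i h _
  comm_bwd i h x := by
    rw [dsumModule_bwd, dsumModule_bwd]
    exact DirectSum.ext_component k fun j => (φ j).comm_bwd i h _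

/-- Zero summands can be dropped from a direct sum of zigzag modules. -/
def dsumSubtypeIso (P : I → Prop) [DecidablePred P]
    (hF : ∀ j, ¬ P j → ∀ i, Subsingleton ((F j).V i)) :
    ZigzagIso (dsumModule k d I F) (dsumModule k d {j // P j} fun j => F j) where
  e i := directSumSubtypeEquiv k P fun j hj => hF j hj i
  comm_fwd i h x := by
    rw [dsumModule_fwd, dsumModule_fwd]
    exact DirectSum.ext_component k fun _ => rfl
  comm_bwd i h x := by
    rw [dsumModule_bwd, dsumModule_bwd]
    exact DirectSum.ext_component k fun _ => rfl

end Sum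

section Delete

theorem delShape_apply (d : ℕ → Bool) (κ i : ℕ) : delShape d κ i = d (delIdx κ i) :=
  (apply_ite d _ _ _).symm

theorem delIdx_succ_of_ne {κ i : ℕ} (hi : i + 1 ≠ κ) : delIdx κ (i + 1) = delIdx κ i + 1 := by
  unfold delIdx
  split_ifs <;> omega

theorem succ_ne_of_delShape_eq_false {κ i : ℕ} (hd1 : d (κ - 1) = true)
    (h : delShape d κ i = false) : i + 1 ≠ κ := by
  rintro rfl
  simp_all [delShape]

namespace ZigzagModule

variable (M : ZigzagModule k d)

/-- The forward structure map out of index `a`, with the target index `b` equal to `a + 1` only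
propositionally; this lets the maps of `deleteModule` be described without casts. -/
def fwdOfEq {a b : ℕ} (hab : b = a + 1) (h : d a = true) : M.V a →ₗ[k] M.V b :=
  hab ▸ M.fwd a h

/-- The backward structure map into index `a`, with the source index `b` equal to `a + 1` only
propositionally. -/
def bwdOfEq {a b : ℕ} (hab : b = a + 1) (h : d a = false) : M.V b →ₗ[k] M.V a :=
  hab ▸ M.bwd a h

theorem fwd_heq_fwdOfEq {a b i : ℕ} (hai : a = i) (hab : b = a + 1) (ha : d a = true) :
    M.fwd i (hai ▸ ha) ≍ M.fwdOfEq hab ha := by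
  subst hai hab
  rfl

theorem bwd_heq_bwdOfEq {a b i : ℕ} (hai : a = i) (hab : b = a + 1) (ha : d a = false) :
    M.bwd i (hai ▸ ha) ≍ M.bwdOfEq hab ha := by
  subst hai hab
  rfl

theorem fwd_comp_fwd_heq {a b i : ℕ} (hai : a = i) (hb : b = i + 1 + 1) (ha : d a = true)
    (hi : d (i + 1) = true) :
    M.fwd (i + 1) hi ∘ₗ M.fwd i (hai ▸ ha) ≍ M.fwdOfEq hb hi ∘ₗ M.fwdOfEq (hai ▸ rfl) ha := by
  subst hai hb
  rfl

end ZigzagModule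

namespace ZigzagHom

variable {M N : ZigzagModule k d} (f : ZigzagHom M N) {a b : ℕ}

theorem comm_fwdOfEq (hab : b = a + 1) (h : d a = true) (x : M.V a) :
    f.app b (M.fwdOfEq hab h x) = N.fwdOfEq hab h (f.app a x) := by
  subst hab
  exact f.comm_fwd a h x

theorem comm_bwdOfEq (hab : b = a + 1) (h : d a = false) (x : M.V b) :
    f.app a (M.bwdOfEq hab h x) = N.bwdOfEq hab h (f.app b x) := by
  subst hab
  exact f.comm_bwd a h x

end ZigzagHom

variable {κ : ℕ} (hκ : 1 ≤ κ) (hd1 : d (κ - 1) = true) (hd2 : d κ = true)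

theorem deleteModule_fwd_of_ne (M : ZigzagModule k d) {i : ℕ} (hi : i + 1 ≠ κ)
    (h : delShape d κ i = true) :
    (deleteModule M κ hκ hd1 hd2).fwd i h =
      M.fwdOfEq (delIdx_succ_of_ne hi) (delShape_apply d κ i ▸ h) := by
  apply eq_of_heq
  rcases hi.lt_or_gt with hlt | hgt
  · simp only [deleteModule, dif_pos hlt, eq_mpr_eq_cast, cast_cast]
    exact (cast_heq _ _).trans (M.fwd_heq_fwdOfEq (if_pos (by omega)) _ _)
  · simp only [deleteModule, dif_neg hgt.not_gt, dif_neg hi, eq_mpr_eq_cast, cast_cast]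
    exact (cast_heq _ _).trans (M.fwd_heq_fwdOfEq (if_neg (by omega)) _ _)

theorem deleteModule_fwd_of_eq (M : ZigzagModule k d) {i : ℕ} (hi : i + 1 = κ)
    (h : delShape d κ i = true) :
    (deleteModule M κ hκ hd1 hd2).fwd i h =
      M.fwdOfEq (by simp [delIdx, hi]) hd2 ∘ₗ
        M.fwdOfEq (by simp [delIdx, ← hi]) (delShape_apply d κ i ▸ h) := by
  subst hi
  apply eq_of_heq
  simp only [deleteModule, dif_neg (lt_irrefl (i + 1)), dif_pos, eq_mpr_eq_cast, cast_cast]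
  exact (cast_heq _ _).trans (M.fwd_comp_fwd_heq (if_pos (by omega)) _ _ _)

theorem deleteModule_bwd_of_ne (M : ZigzagModule k d) {i : ℕ} (hi : i + 1 ≠ κ)
    (h : delShape d κ i = false) :
    (deleteModule M κ hκ hd1 hd2).bwd i h =
      M.bwdOfEq (delIdx_succ_of_ne hi) (delShape_apply d κ i ▸ h) := by
  apply eq_of_heq
  rcases hi.lt_or_gt with hlt | hgt
  · simp only [deleteModule, dif_pos hlt, eq_mpr_eq_cast, cast_cast]
    exact (cast_heq _ _).trans (M.bwd_heq_bwdOfEq (if_pos (by omega)) _ _)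
  · simp only [deleteModule, dif_neg hgt.not_gt, dif_neg hi, eq_mpr_eq_cast, cast_cast]
    exact (cast_heq _ _).trans (M.bwd_heq_bwdOfEq (if_neg (by omega)) _ _)

/-- Deletion of `κ` as a functor, on morphisms: forget the component at `κ`. -/
def ZigzagHom.delete {M N : ZigzagModule k d} (f : ZigzagHom M N) :
    ZigzagHom (deleteModule M κ hκ hd1 hd2) (deleteModule N κ hκ hd1 hd2) where
  app i := f.app (delIdx κ i)
  comm_fwd i h x := by
    rcases eq_or_ne (i + 1) κ with hi | hi
    · rw [deleteModule_fwd_of_eq hκ hd1 hd2 _ hi, deleteModule_fwd_of_eq hκ hd1 hd2 _ hi]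
      exact (f.comm_fwdOfEq _ _ _).trans (congrArg _ (f.comm_fwdOfEq _ _ _))
    · rw [deleteModule_fwd_of_ne hκ hd1 hd2 _ hi, deleteModule_fwd_of_ne hκ hd1 hd2 _ hi]
      exact f.comm_fwdOfEq _ _ _
  comm_bwd i h x := by
    have hi := succ_ne_of_delShape_eq_false hd1 h
    rw [deleteModule_bwd_of_ne hκ hd1 hd2 _ hi, deleteModule_bwd_of_ne hκ hd1 hd2 _ hi]
    exact f.comm_bwdOfEq _ _ _

/-- Deletion of `κ` preserves isomorphisms. -/
def ZigzagIso.delete {M N : ZigzagModule k d} (φ : ZigzagIso M N) :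
    ZigzagIso (deleteModule M κ hκ hd1 hd2) (deleteModule N κ hκ hd1 hd2) where
  e i := φ.e (delIdx κ i)
  comm_fwd := (φ.toHom.delete hκ hd1 hd2).comm_fwd
  comm_bwd := (φ.toHom.delete hκ hd1 hd2).comm_bwd

/-- Deletion of `κ` commutes with direct sums. -/
noncomputable def deleteDsumIso {I : Type} [DecidableEq I] (F : I → ZigzagModule k d) :
    ZigzagIso (deleteModule (dsumModule k d I F) κ hκ hd1 hd2)
      (dsumModule k (delShape d κ) I fun j => deleteModule (F j) κ hκ hd1 hd2) where
  e i := LinearEquiv.refl k _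
  comm_fwd i h x := by
    rw [dsumModule_fwd]
    exact DirectSum.ext_component k fun j => ((dsumProj F j).delete hκ hd1 hd2).comm_fwd i h x
  comm_bwd i h x := by
    rw [dsumModule_bwd]
    exact DirectSum.ext_component k fun j => ((dsumProj F j).delete hκ hd1 hd2).comm_bwd i h x

end Delete

section Interval

variable {p q : ℕ}

theorem coe_eq_zero_of_notMem_interval {a : ℕ} (ha : ¬ (p ≤ a ∧ a ≤ q))
    (x : intervalSpace k p q a) : (x : k) = 0 := by
  simpa only [intervalSpace, if_neg ha, Submodule.mem_bot] using x.2

theorem subsingleton_intervalSpace_self_delIdx (κ i : ℕ) :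
    Subsingleton (intervalSpace k κ κ (delIdx κ i)) :=
  have hi : ¬ (κ ≤ delIdx κ i ∧ delIdx κ i ≤ κ) := by unfold delIdx; split_ifs <;> omega
  ⟨fun x y => Subtype.ext <| by simp only [coe_eq_zero_of_notMem_interval hi]⟩

theorem coe_intervalMap {a b : ℕ} (x : intervalSpace k p q a) :
    (intervalMap k p q a b x : k) = if p ≤ b ∧ b ≤ q then (x : k) else 0 := by
  split_ifs with hb
  · have hab : intervalSpace k p q a ≤ intervalSpace k p q b := by simp [intervalSpace, hb]
    rw [intervalMap, dif_pos hab, Submodule.coe_inclusion]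
  · exact coe_eq_zero_of_notMem_interval hb _

theorem intervalMap_comp_intervalMap {a b c : ℕ} (hab : a ≤ b) (hbc : b ≤ c) :
    intervalMap k p q b c ∘ₗ intervalMap k p q a b = intervalMap k p q a c := by
  ext x
  simp only [LinearMap.comp_apply, coe_intervalMap]
  split_ifs with hc hb
  · rfl
  · have ha : ¬ (p ≤ a ∧ a ≤ q) := by omega
    exact (coe_eq_zero_of_notMem_interval ha x).symm
  · rfl

theorem mem_restrict_iff_delIdx_mem {κ : ℕ} (hκ : 1 ≤ κ) (p q i : ℕ) :
    (if p ≤ κ then p else p - 1) ≤ i ∧ i ≤ (if q < κ then q else q - 1) ↔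
      p ≤ delIdx κ i ∧ delIdx κ i ≤ q := by
  unfold delIdx
  split_ifs <;> omega

theorem intervalSpace_delIdx {κ : ℕ} (hκ : 1 ≤ κ) (p q i : ℕ) :
    intervalSpace k p q (delIdx κ i) =
      intervalSpace k (if p ≤ κ then p else p - 1) (if q < κ then q else q - 1) i := by
  simp only [intervalSpace, mem_restrict_iff_delIdx_mem hκ]

theorem ofEq_intervalMap_delIdx {κ : ℕ} (hκ : 1 ≤ κ) (i j : ℕ)
    (x : intervalSpace k p q (delIdx κ i)) :
    LinearEquiv.ofEq _ _ (intervalSpace_delIdx hκ p q j)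
        (intervalMap k p q (delIdx κ i) (delIdx κ j) x) =
      intervalMap k (if p ≤ κ then p else p - 1) (if q < κ then q else q - 1) i j
        (LinearEquiv.ofEq _ _ (intervalSpace_delIdx hκ p q i) x) := by
  ext
  simp only [LinearEquiv.coe_ofEq_apply, coe_intervalMap, mem_restrict_iff_delIdx_mem hκ]

theorem intervalModule_fwdOfEq {a b : ℕ} (hab : b = a + 1) (h : d a = true) :
    (intervalModule k d p q).fwdOfEq hab h = intervalMap k p q a b := by
  subst hab
  rfl

theorem intervalModule_bwdOfEq {a b : ℕ} (hab : b = a + 1) (h : d a = false) :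
    (intervalModule k d p q).bwdOfEq hab h = intervalMap k p q b a := by
  subst hab
  rfl

variable {κ : ℕ} (hκ : 1 ≤ κ) (hd1 : d (κ - 1) = true) (hd2 : d κ = true)

theorem deleteModule_intervalModule_fwd {i : ℕ} (h : delShape d κ i = true) :
    (deleteModule (intervalModule k d p q) κ hκ hd1 hd2).fwd i h =
      intervalMap k p q (delIdx κ i) (delIdx κ (i + 1)) := by
  rcases eq_or_ne (i + 1) κ with hi | hi
  · rw [deleteModule_fwd_of_eq hκ hd1 hd2 _ hi, intervalModule_fwdOfEq, intervalModule_fwdOfEq]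
    apply intervalMap_comp_intervalMap <;> simp [delIdx, ← hi]
  · rw [deleteModule_fwd_of_ne hκ hd1 hd2 _ hi, intervalModule_fwdOfEq]

theorem deleteModule_intervalModule_bwd {i : ℕ} (h : delShape d κ i = false) :
    (deleteModule (intervalModule k d p q) κ hκ hd1 hd2).bwd i h =
      intervalMap k p q (delIdx κ (i + 1)) (delIdx κ i) := by
  rw [deleteModule_bwd_of_ne hκ hd1 hd2 _ (succ_ne_of_delShape_eq_false hd1 h),
    intervalModule_bwdOfEq]

variable (k p q) in
/-- Deletion of `κ` turns the interval module of `[p,q]` into that of the relabelled restriction of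
`[p,q]`. The restriction of `[κ,κ]` comes out as `[κ,κ-1]`, whose interval module is zero. -/
def deleteIntervalIso :
    ZigzagIso (deleteModule (intervalModule k d p q) κ hκ hd1 hd2)
      (intervalModule k (delShape d κ)
        (if p ≤ κ then p else p - 1) (if q < κ then q else q - 1)) where
  e i := LinearEquiv.ofEq _ _ (intervalSpace_delIdx hκ p q i)
  comm_fwd i h x := by
    rw [deleteModule_intervalModule_fwd]
    exact ofEq_intervalMap_delIdx hκ _ _ x
  comm_bwd i h x := by
    rw [deleteModule_intervalModule_bwd]
    exact ofEq_intervalMap_delIdx hκ _ _ x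

end Interval

theorem restriction_principle_general {κ : ℕ} (hκ : 1 ≤ κ)
    (hd1 : d (κ - 1) = true) (hd2 : d κ = true) {V : ZigzagModule k d}
    {I : Type} [DecidableEq I] (p q : I → ℕ)
    (hV : Nonempty (ZigzagIso V (dsumModule k d I fun i => intervalModule k d (p i) (q i)))) :
    Nonempty (ZigzagIso (deleteModule V κ hκ hd1 hd2)
      (dsumModule k (delShape d κ) {i : I // ¬ (p i = κ ∧ q i = κ)} fun i =>
        intervalModule k (delShape d κ)
          (if p i.1 ≤ κ then p i.1 else p i.1 - 1)
          (if q i.1 < κ then q i.1 else q i.1 - 1))) := by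
  obtain ⟨φ⟩ := hV
  have deleted_zero (i : I) (hi : ¬ ¬ (p i = κ ∧ q i = κ)) (a : ℕ) :
      Subsingleton ((deleteModule (intervalModule k d (p i) (q i)) κ hκ hd1 hd2).V a) := by
    obtain ⟨hp, hq⟩ := not_not.mp hi
    rw [hp, hq]
    exact subsingleton_intervalSpace_self_delIdx κ a
  exact ⟨(φ.delete hκ hd1 hd2).trans <| (deleteDsumIso hκ hd1 hd2 _).trans <|
    (dsumSubtypeIso _ deleted_zero).trans <|
      dsumCongr fun i => deleteIntervalIso k (p i) (q i) hκ hd1 hd2⟩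

end Zigzag

/-- **Restriction Principle (decomposition form).**
Let `d` be a zigzag shape whose structure maps at positions `κ-1` and `κ`
(0-based; `1 ≤ κ`, `κ + 1 < n`) both point forward, and let `V` be a zigzag
module of shape `d` that decomposes as a direct sum `⊕_{i∈I} I[p_i, q_i]` of
interval modules supported in `[0, n)`.  Then the module `W` obtained from `V`
by deleting the space at index `κ` and composing the two maps there decomposes
as the direct sum, over those `i ∈ I` with `[p_i, q_i] ≠ [κ, κ]`, of the
interval modules over the restricted intervals, reindexed along the relabelling
of `{0, …, n-1} \ {κ}` as `{0, …, n-2}`: an interval not containing `κ`, or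
containing `κ` in its interior, restricts to `[p,q] \ {κ}`; `[p, κ]` with
`p < κ` restricts to `[p, κ-1]`; and `[κ, q]` with `q > κ` restricts to
`[κ+1, q]` (relabelled as `[κ, q-1]`). -/
theorem restriction_principle
    (k : Type) [Field k] (n : ℕ) (hn : 3 ≤ n) (d : ℕ → Bool)
    (κ : ℕ) (hκ1 : 1 ≤ κ) (hκn : κ + 1 < n)
    (hd1 : d (κ - 1) = true) (hd2 : d κ = true)
    (V : ZigzagModule k d)
    (I : Type) [DecidableEq I] (p q : I → ℕ)
    (hpq : ∀ i, p i ≤ q i) (hqn : ∀ i, q i < n)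
    (hiso : Nonempty (ZigzagIso V
      (dsumModule k d I fun i => intervalModule k d (p i) (q i)))) :
    Nonempty (ZigzagIso
      (deleteModule V κ hκ1 hd1 hd2)
      (dsumModule k (delShape d κ) {i : I // ¬ (p i = κ ∧ q i = κ)}
        (fun i => intervalModule k (delShape d κ)
          (if p i.1 ≤ κ then p i.1 else p i.1 - 1)
          (if q i.1 < κ then q i.1 else q i.1 - 1)))) :=
  restriction_principle_general hκ1 hd1 hd2 p q hiso
end

section
/- Abstract braid diagram chase (equivalence of the two tautness criteria). Let k be a field and let A₁, B₁, U₁, P_A, P_B, A₀, B₀, U₀, Q_A, Q_B be k-vector spaces equipped with linear maps a₁ : A₁ → U₁, b₁ : B₁ → U₁, p_A : U₁ → P_A, p_B : U₁ → P_B, ∂_A : P_A → A₀, ∂_B : P_B → B₀, i_A : A₀ → U₀, i_B : B₀ → U₀, r_A : U₀ → Q_A, r_B : U₀ → Q_B. Assume the sequence A₁ →a₁ U₁ →p_A P_A →∂_A A₀ →i_A U₀ →r_A Q_A is exact at U₁, at P_A, at A₀ and at U₀, and the sequence B₁ →b₁ U₁ →p_B P_B →∂_B B₀ →i_B U₀ →r_B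 Q_B is exact at U₁, at P_B, at B₀ and at U₀. If the composite p_B ∘ a₁ is surjective and the composite r_B ∘ i_A is injective, then the composite p_A ∘ b₁ is surjective and the composite r_A ∘ i_B is injective. -/
/-!
A composite `g ∘ₗ f` is surjective iff `g` is surjective and `range f ⊔ ker g = ⊤`, and injective
iff `f` is injective and `range f ⊓ ker g = ⊥`. By exactness `range a₁ = ker pA` and
`range b₁ = ker pB`, so the lattice condition for `pB ∘ₗ a₁` is the one for `pA ∘ₗ b₁` with the
two submodules of `U₁` interchanged; the same happens in `U₀`. What remains is that `pB` is
surjective iff `dB = 0` iff `iB` is injective, and likewise for `A`: surjectivity and injectivity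
trade places between the two criteria.
-/

open Function LinearMap

section

variable {R M N P Q : Type*} [Ring R] [AddCommGroup M] [AddCommGroup N] [AddCommGroup P]
  [AddCommGroup Q] [Module R M] [Module R N] [Module R P] [Module R Q]
  {f : M →ₗ[R] N} {g : N →ₗ[R] P} {h : P →ₗ[R] Q}

theorem surjective_comp_iff_codisjoint_range_ker :
    Surjective (g ∘ₗ f) ↔ Surjective g ∧ Codisjoint (range f) (ker g) := by
  have codisjoint_iff_of_surjective (hg : Surjective g) :
      Surjective (g ∘ₗ f) ↔ Codisjoint (range f) (ker g) := by
    rw [← range_eq_top, range_comp, map_eq_top_iff (range_eq_top.2 hg), codisjoint_iff]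
  exact ⟨fun hgf ↦ ⟨.of_comp hgf, (codisjoint_iff_of_surjective (.of_comp hgf)).1 hgf⟩,
    fun ⟨hg, hcodisjoint⟩ ↦ (codisjoint_iff_of_surjective hg).2 hcodisjoint⟩

theorem injective_comp_iff_disjoint_range_ker :
    Injective (g ∘ₗ f) ↔ Injective f ∧ Disjoint (range f) (ker g) := by
  rw [disjoint_ker_iff_injOn, coe_range, coe_comp]
  exact ⟨fun hgf ↦ ⟨hgf.of_comp, hgf.injOn_range⟩,
    fun ⟨hf, hg⟩ ↦ (hg.injective_iff _ subset_rfl).2 hf⟩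

theorem surjective_iff_injective_of_exact (hfg : Exact f g) (hgh : Exact g h) :
    Surjective f ↔ Injective h :=
  (surjective_iff_eq_zero_of_exact hfg).trans (injective_iff_eq_zero_of_exact hgh).symm

end

theorem braid_diagram_chase_general {R A₁ B₁ U₁ PA PB A₀ B₀ U₀ QA QB : Type*} [Ring R]
    [AddCommGroup A₁] [Module R A₁] [AddCommGroup B₁] [Module R B₁]
    [AddCommGroup U₁] [Module R U₁] [AddCommGroup PA] [Module R PA]
    [AddCommGroup PB] [Module R PB] [AddCommGroup A₀] [Module R A₀]
    [AddCommGroup B₀] [Module R B₀] [AddCommGroup U₀] [Module R U₀]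
    [AddCommGroup QA] [Module R QA] [AddCommGroup QB] [Module R QB]
    {a₁ : A₁ →ₗ[R] U₁} {b₁ : B₁ →ₗ[R] U₁} {pA : U₁ →ₗ[R] PA} {pB : U₁ →ₗ[R] PB}
    {dA : PA →ₗ[R] A₀} {dB : PB →ₗ[R] B₀} {iA : A₀ →ₗ[R] U₀} {iB : B₀ →ₗ[R] U₀}
    {rA : U₀ →ₗ[R] QA} {rB : U₀ →ₗ[R] QB}
    (hA1 : Exact a₁ pA) (hA2 : Exact pA dA) (hA3 : Exact dA iA) (hA4 : Exact iA rA)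
    (hB1 : Exact b₁ pB) (hB2 : Exact pB dB) (hB3 : Exact dB iB) (hB4 : Exact iB rB) :
    Surjective (pB ∘ₗ a₁) ∧ Injective (rB ∘ₗ iA) ↔
      Surjective (pA ∘ₗ b₁) ∧ Injective (rA ∘ₗ iB) := by
  have codisjoint_swap : Codisjoint (range a₁) (ker pB) ↔ Codisjoint (range b₁) (ker pA) := by
    rw [hA1.linearMap_ker_eq, hB1.linearMap_ker_eq, codisjoint_comm]
  have disjoint_swap : Disjoint (range iA) (ker rB) ↔ Disjoint (range iB) (ker rA) := by
    rw [hA4.linearMap_ker_eq, hB4.linearMap_ker_eq, disjoint_comm]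
  have pA_surjective_iff : Surjective pA ↔ Injective iA :=
    surjective_iff_injective_of_exact hA2 hA3
  have pB_surjective_iff : Surjective pB ↔ Injective iB :=
    surjective_iff_injective_of_exact hB2 hB3
  rw [surjective_comp_iff_codisjoint_range_ker, injective_comp_iff_disjoint_range_ker,
    surjective_comp_iff_codisjoint_range_ker, injective_comp_iff_disjoint_range_ker,
    codisjoint_swap, disjoint_swap, pA_surjective_iff, pB_surjective_iff]
  tauto

/-- **Abstract braid diagram chase (equivalence of the two tautness criteria).**
Two five-map sequences of `k`-vector spaces sharing the objects `U₁` and `U₀`,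
each exact at its four middle objects.  If `pB ∘ a₁` is surjective and
`rB ∘ iA` is injective, then `pA ∘ b₁` is surjective and `rA ∘ iB` is
injective. -/
theorem braid_diagram_chase
    (k : Type) [Field k]
    (A₁ B₁ U₁ PA PB A₀ B₀ U₀ QA QB : Type)
    [AddCommGroup A₁] [Module k A₁] [AddCommGroup B₁] [Module k B₁]
    [AddCommGroup U₁] [Module k U₁] [AddCommGroup PA] [Module k PA]
    [AddCommGroup PB] [Module k PB] [AddCommGroup A₀] [Module k A₀]
    [AddCommGroup B₀] [Module k B₀] [AddCommGroup U₀] [Module k U₀]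
    [AddCommGroup QA] [Module k QA] [AddCommGroup QB] [Module k QB]
    (a₁ : A₁ →ₗ[k] U₁) (b₁ : B₁ →ₗ[k] U₁)
    (pA : U₁ →ₗ[k] PA) (pB : U₁ →ₗ[k] PB)
    (dA : PA →ₗ[k] A₀) (dB : PB →ₗ[k] B₀)
    (iA : A₀ →ₗ[k] U₀) (iB : B₀ →ₗ[k] U₀)
    (rA : U₀ →ₗ[k] QA) (rB : U₀ →ₗ[k] QB)
    (hA1 : Function.Exact a₁ pA) (hA2 : Function.Exact pA dA)
    (hA3 : Function.Exact dA iA) (hA4 : Function.Exact iA rA)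
    (hB1 : Function.Exact b₁ pB) (hB2 : Function.Exact pB dB)
    (hB3 : Function.Exact dB iB) (hB4 : Function.Exact iB rB)
    (hsurj : Function.Surjective (pB ∘ₗ a₁))
    (hinj : Function.Injective (rB ∘ₗ iA)) :
    Function.Surjective (pA ∘ₗ b₁) ∧ Function.Injective (rA ∘ₗ iB) := by
  exact (braid_diagram_chase_general hA1 hA2 hA3 hA4 hB1 hB2 hB3 hB4).1 ⟨hsurj, hinj⟩
end

section
/- Abstract ladder lemma (tautness implies exactness of the Mayer–Vietoris diamond). Let k be a field and let B₁, Y, B, P and A₁, A, U, Q be k-vector spaces with linear maps forming two rows ∂ : B₁ → Y, i₂ : Y → B, π : B → P and ∂' : A₁ → A, j₁ : A → U, π' : U → Q, and vertical linear maps ε : B₁ → A₁, i₁ : Y → A, j₂ : B → U, μ : P → Q. Assume: (1) the top row is exact at Y (the kernel of i₂ equals the range of ∂) and exact at B (the kernel of π equals the range of i₂); (2) the bottom row is exact at A (the kernel of j₁ equals the range of ∂') and exact at U (the kernel of π' equals the range of j₁); (3) the squares commute: ∂' ∘ ε = i₁ ∘ ∂, j₁ ∘ i₁ = j₂ ∘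 i₂, and π' ∘ j₂ = μ ∘ π; (4) ε is surjective and μ is injective. Then for all a ∈ A and b ∈ B, one has j₁(a) = j₂(b) if and only if there exists y ∈ Y with i₁(y) = a and i₂(y) = b. -/
/-!
If `j₁ a = j₂ b`, then `μ (π b) = π' (j₁ a) = 0`, so `b = i₂ y` for some `y`. The error
`-i₁ y + a` lies in the kernel of `j₁`, and the left part of the ladder shows that every element
of this kernel is `i₁ z` for some `z` with `i₂ z = 0`. Hence `y + z` maps to both `a` and `b`.
-/

section Ladder

open Function

variable {B₁ Y B P A₁ A U Q : Type*} [AddGroup Y] [AddGroup B] [AddGroup A] [AddGroup U]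
  {i₁ : Y →+ A} {i₂ : Y →+ B} {j₁ : A →+ U} {j₂ : B →+ U}

theorem eq_iff_exists_of_ker_le_of_comap_range_le
    (comm : ∀ y, j₁ (i₁ y) = j₂ (i₂ y))
    (ker_le : j₁.ker ≤ i₂.ker.map i₁) (comap_le : j₁.range.comap j₂ ≤ i₂.range)
    (a : A) (b : B) : j₁ a = j₂ b ↔ ∃ y, i₁ y = a ∧ i₂ y = b := by
  constructor
  · intro hab
    obtain ⟨y, rfl⟩ : b ∈ i₂.range := comap_le ⟨a, hab⟩
    have error_mem_ker : -i₁ y + a ∈ j₁.ker := by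
      rw [AddMonoidHom.mem_ker, map_add, map_neg, comm, hab, neg_add_cancel]
    obtain ⟨z, hz : i₂ z = 0, hza⟩ := ker_le error_mem_ker
    exact ⟨y + z, by rw [map_add, hza, add_neg_cancel_left], by rw [map_add, hz, add_zero]⟩
  · rintro ⟨y, rfl, rfl⟩
    exact comm y

theorem ker_le_map_ker_of_surjective {bd : B₁ → Y} {ad : A₁ → A} {ε : B₁ → A₁}
    (bd_zero : ∀ x, i₂ (bd x) = 0) (exact_A : Exact ad j₁)
    (comm : ∀ x, ad (ε x) = i₁ (bd x)) (hε : Surjective ε) :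
    j₁.ker ≤ i₂.ker.map i₁ := by
  intro a ha
  obtain ⟨c, rfl⟩ := (exact_A a).1 ha
  obtain ⟨x, rfl⟩ := hε c
  exact ⟨bd x, bd_zero x, (comm x).symm⟩

theorem comap_range_le_range_of_injective [Zero P] [Zero Q]
    {π : B → P} {π' : U → Q} {μ : ZeroHom P Q}
    (exact_B : Exact i₂ π) (proj_zero : ∀ a, π' (j₁ a) = 0)
    (comm : ∀ b, π' (j₂ b) = μ (π b)) (hμ : Injective μ) :
    j₁.range.comap j₂ ≤ i₂.range := by
  rintro b ⟨a, hab⟩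
  have μ_proj_eq_zero : μ (π b) = μ 0 := by rw [← comm, ← hab, proj_zero, map_zero]
  exact (exact_B b).1 (hμ μ_proj_eq_zero)

theorem ladder_lemma_general [Zero P] [Zero Q]
    {bd : B₁ → Y} {π : B → P} {ad : A₁ → A} {π' : U → Q} {ε : B₁ → A₁} {μ : ZeroHom P Q}
    (bd_zero : ∀ x, i₂ (bd x) = 0) (exact_B : Exact i₂ π)
    (exact_A : Exact ad j₁) (proj_zero : ∀ a, π' (j₁ a) = 0)
    (comm_left : ∀ x, ad (ε x) = i₁ (bd x))
    (comm_mid : ∀ y, j₁ (i₁ y) = j₂ (i₂ y))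
    (comm_right : ∀ b, π' (j₂ b) = μ (π b))
    (hε : Surjective ε) (hμ : Injective μ) (a : A) (b : B) :
    j₁ a = j₂ b ↔ ∃ y, i₁ y = a ∧ i₂ y = b :=
  eq_iff_exists_of_ker_le_of_comap_range_le comm_mid
    (ker_le_map_ker_of_surjective bd_zero exact_A comm_left hε)
    (comap_range_le_range_of_injective exact_B proj_zero comm_right hμ) a b

end Ladder

/-- **Abstract ladder lemma (tautness implies exactness of the Mayer–Vietoris
diamond).**  Given two exact rows `B₁ → Y → B → P` and `A₁ → A → U → Q`,
connected by vertical maps `ε, i₁, j₂, μ` making the three squares commute,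
with `ε` surjective and `μ` injective, the diamond `Y → A, Y → B, A → U, B → U`
is exact in the Mayer–Vietoris sense. -/
theorem ladder_lemma
    (k : Type) [Field k]
    (B₁ Y B P A₁ A U Q : Type)
    [AddCommGroup B₁] [Module k B₁] [AddCommGroup Y] [Module k Y]
    [AddCommGroup B] [Module k B] [AddCommGroup P] [Module k P]
    [AddCommGroup A₁] [Module k A₁] [AddCommGroup A] [Module k A]
    [AddCommGroup U] [Module k U] [AddCommGroup Q] [Module k Q]
    (bd : B₁ →ₗ[k] Y) (i₂ : Y →ₗ[k] B) (π : B →ₗ[k] P)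
    (ad : A₁ →ₗ[k] A) (j₁ : A →ₗ[k] U) (π' : U →ₗ[k] Q)
    (ε : B₁ →ₗ[k] A₁) (i₁ : Y →ₗ[k] A) (j₂ : B →ₗ[k] U) (μ : P →ₗ[k] Q)
    (htop1 : Function.Exact bd i₂) (htop2 : Function.Exact i₂ π)
    (hbot1 : Function.Exact ad j₁) (hbot2 : Function.Exact j₁ π')
    (hsq1 : ad ∘ₗ ε = i₁ ∘ₗ bd)
    (hsq2 : j₁ ∘ₗ i₁ = j₂ ∘ₗ i₂)
    (hsq3 : π' ∘ₗ j₂ = μ ∘ₗ π)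
    (hε : Function.Surjective ε) (hμ : Function.Injective μ) :
    ∀ (a : A) (b : B), j₁ a = j₂ b ↔ ∃ y : Y, i₁ y = a ∧ i₂ y = b :=
  ladder_lemma_general (i₁ := i₁.toAddMonoidHom) (i₂ := i₂.toAddMonoidHom)
    (j₁ := j₁.toAddMonoidHom) (j₂ := j₂.toAddMonoidHom) (μ := ⟨μ, map_zero μ⟩)
    htop1.apply_apply_eq_zero htop2 hbot1 hbot2.apply_apply_eq_zero
    (LinearMap.congr_fun hsq1) (LinearMap.congr_fun hsq2) (LinearMap.congr_fun hsq3) hε hμ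
end
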